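/- Let V be a type of vertices with a label function L : V → Fin (k+1), and let F be a set of triangular faces all of which are rk-faces. Let f^w = {v₁, v₂, v_w} ∈ F and f^e = {v₁, v₂, v_e} ∈ F be the two faces sharing the edge e = {v₁, v₂}, let j be the label of e (j = L(v₁) if L(v₁) ≠ 0, otherwise j = L(v₂)), and let v_n ∉ {v₁, v₂, v_w, v_e} be a new vertex with L(v_n) = j. Then every face of the set F' = (F \ {f^w, f^e}) ∪ {{v_n, v₁, v_w}, {v_n, v₂, v_w}, {v_n, v₁, v_e}, {v_n, v₂, v_e}} obtained by one edge-split step is an rk-face; i.e., an edge split using the labeling rule L(v_n) = L(e) on an rk-mesh produces an rk-mesh. -/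

import Mathlib

/-- A face (finite set of vertices) is regular k-labeled (an rk-face) w.r.t. a label
function `L : V → Fin (k+1)` if some vertex has nonzero label, and any two vertices
with nonzero labels have equal labels. -/
def rkFace {V : Type*} {k : ℕ} (L : V → Fin (k + 1)) (f : Finset V) : Prop :=
  (∃ v ∈ f, L v ≠ 0) ∧ ∀ v₁ ∈ f, ∀ v₂ ∈ f, L v₁ ≠ 0 → L v₂ ≠ 0 → L v₁ = L v₂

/-- An edge split, using the labeling rule `L(v_n) = L(e)`, on an rk-mesh produces
an rk-mesh: with `j` the label of the split edge `{v₁, v₂}` (namely `L v₁` if it is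
nonzero, else `L v₂`), every face of the resulting set of faces is an rk-face. -/
theorem edgeSplit_rkMesh {V : Type*} [DecidableEq V] {k : ℕ}
    (L : V → Fin (k + 1)) (F : Set (Finset V)) (hF : ∀ f ∈ F, rkFace L f)
    (v₁ v₂ vw ve vn : V) (j : Fin (k + 1))
    (hwF : ({v₁, v₂, vw} : Finset V) ∈ F)
    (heF : ({v₁, v₂, ve} : Finset V) ∈ F)
    (hj : j = if L v₁ ≠ 0 then L v₁ else L v₂)
    (hdist : vn ≠ v₁ ∧ vn ≠ v₂ ∧ vn ≠ vw ∧ vn ≠ ve) (hLn : L vn = j) :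
    ∀ g ∈ (F \ {({v₁, v₂, vw} : Finset V), ({v₁, v₂, ve} : Finset V)}) ∪
        {({vn, v₁, vw} : Finset V), ({vn, v₂, vw} : Finset V),
          ({vn, v₁, ve} : Finset V), ({vn, v₂, ve} : Finset V)},
      rkFace L g := by
  have key : ∀ c : V, rkFace L ({v₁, v₂, c} : Finset V) →
      rkFace L ({vn, v₁, c} : Finset V) ∧ rkFace L ({vn, v₂, c} : Finset V) := by
    intro c hc
    subst hj
    simp only [rkFace, Finset.mem_insert, Finset.mem_singleton, exists_eq_or_imp,
      forall_eq_or_imp, exists_eq_left, forall_eq] at hc ⊢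
    rw [hLn]
    clear hLn hdist hwF heF hF
    generalize L v₁ = a at *
    generalize L v₂ = b at *
    generalize L c = d at *
    by_cases h1 : a = 0 <;> by_cases h2 : b = 0 <;> by_cases h3 : d = 0 <;> grind
  intro g hg
  rcases hg with hg | hg
  · exact hF g hg.1
  · rcases hg with rfl | rfl | rfl | rfl
    · exact (key vw (hF _ hwF)).1
    · exact (key vw (hF _ hwF)).2
    · exact (key ve (hF _ heF)).1
    · exact (key ve (hF _ heF)).2
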